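/- arXiv:2312.07107 — 2 statements merged into one kernel-verified Lean document; each statement's English description precedes it below -/
import Mathlib

section
/- Strong completeness: For any set of formulae F ⊆ Φ and any formula φ ∈ Φ, if F ⊬ φ, then there exist a game and a state w of that game such that w ⊨ f for each formula f ∈ F and w ⊭ φ. -/
/- Language: formulas over atomic propositions P, data variables V, actors 𝒜 = A.
   `bel T X φ` is B^T_X φ ; `str C T X φ` is [C]^T_X φ. -/
inductive Formula (P V A : Type) : Type
  | atom : P → Formula P V A
  | neg : Formula P V A → Formula P V A
  | imp : Formula P V A → Formula P V A → Formula P V A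
  | bel : Set V → Set V → Formula P V A → Formula P V A
  | str : Set A → Set V → Set V → Formula P V A → Formula P V A

variable {P V A : Type}

/-- Propositional tautologies: true under every valuation respecting ¬ and →. -/
def Tautology (φ : Formula P V A) : Prop :=
  ∀ v : Formula P V A → Prop,
    (∀ ψ, v (Formula.neg ψ) ↔ ¬ v ψ) →
    (∀ ψ χ, v (Formula.imp ψ χ) ↔ (v ψ → v χ)) →
    v φ

/-- Theorems of the logical system of doxastic strategies. -/
inductive Thm : Formula P V A → Prop
  | taut {φ : Formula P V A} : Tautology φ → Thm φ
  | truth {X : Set V} {φ : Formula P V A} :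
      Thm (Formula.imp (Formula.bel ∅ X φ) φ)
  | negIntro {T X : Set V} {φ : Formula P V A} :
      Thm (Formula.imp (Formula.neg (Formula.bel T X φ))
        (Formula.bel ∅ X (Formula.neg (Formula.bel T X φ))))
  | distrib {T X : Set V} {φ ψ : Formula P V A} :
      Thm (Formula.imp (Formula.bel T X (Formula.imp φ ψ))
        (Formula.imp (Formula.bel T X φ) (Formula.bel T X ψ)))
  | trust {T X Y : Set V} {φ : Formula P V A} :
      Thm (Formula.bel T X (Formula.imp (Formula.bel T Y φ) φ))
  | monoB {T T' X X' : Set V} {φ : Formula P V A} :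
      T ⊆ T' → X ⊆ X' →
      Thm (Formula.imp (Formula.bel T X φ) (Formula.bel T' X' φ))
  | monoS {C C' : Set A} {T T' X X' : Set V} {φ : Formula P V A} :
      T ⊆ T' → X ⊆ X' → C ⊆ C' →
      Thm (Formula.imp (Formula.str C T X φ) (Formula.str C' T' X' φ))
  | coop {C D : Set A} {T X : Set V} {φ ψ : Formula P V A} :
      C ∩ D = ∅ →
      Thm (Formula.imp (Formula.str C T X (Formula.imp φ ψ))
        (Formula.imp (Formula.str D T X φ) (Formula.str (C ∪ D) T X ψ)))
  | strIntro₁ {C : Set A} {T X : Set V} {φ : Formula P V A} :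
      Thm (Formula.imp (Formula.str C T X φ) (Formula.bel T X (Formula.str C T X φ)))
  | strIntro₂ {C : Set A} {T X : Set V} {φ : Formula P V A} :
      Thm (Formula.imp (Formula.bel T X (Formula.str C T X φ)) (Formula.str C T X φ))
  | unavoid {T X Y : Set V} {φ : Formula P V A} :
      Thm (Formula.imp (Formula.bel T X (Formula.str ∅ T Y φ)) (Formula.str ∅ T X φ))
  | pub {T : Set V} {φ : Formula P V A} :
      Thm (Formula.imp (Formula.bel T ∅ φ) (Formula.str ∅ T ∅ φ))
  | mp {φ ψ : Formula P V A} : Thm (Formula.imp φ ψ) → Thm φ → Thm ψ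
  | nec {φ : Formula P V A} : Thm φ → Thm (Formula.bel ∅ ∅ φ)

/-- `Deduces F φ`: φ is derivable from F together with the theorems using only Modus Ponens. -/
inductive Deduces (F : Set (Formula P V A)) : Formula P V A → Prop
  | thm {φ : Formula P V A} : Thm φ → Deduces F φ
  | mem {φ : Formula P V A} : φ ∈ F → Deduces F φ
  | mp {φ ψ : Formula P V A} :
      Deduces F (Formula.imp φ ψ) → Deduces F φ → Deduces F ψ

def Consistent (F : Set (Formula P V A)) : Prop :=
  ¬ ∃ φ : Formula P V A, Deduces F φ ∧ Deduces F (Formula.neg φ)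

def MaximalConsistent (F : Set (Formula P V A)) : Prop :=
  Consistent F ∧ ∀ G : Set (Formula P V A), Consistent G → F ⊆ G → F = G

/-- A game. -/
structure Game (P V A : Type) : Type 1 where
  W : Type
  sim : V → W → W → Prop
  sim_equiv : ∀ x : V, Equivalence (sim x)
  trust : W → Set V
  Δ : Type
  delta_nonempty : Nonempty Δ
  M : W → (A → Δ) → W → Prop
  pi : P → Set W

/-- `w ∼_X u`. -/
def Game.simSet (G : Game P V A) (X : Set V) (w u : G.W) : Prop :=
  ∀ x ∈ X, G.sim x w u

/-- The satisfaction relation `w ⊨ φ` (as `Sat G φ w`). -/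
def Sat (G : Game P V A) : Formula P V A → G.W → Prop
  | Formula.atom p, w => w ∈ G.pi p
  | Formula.neg φ, w => ¬ Sat G φ w
  | Formula.imp φ ψ, w => Sat G φ w → Sat G ψ w
  | Formula.bel T X φ, w =>
      ∀ u : G.W, G.simSet X w u → T ⊆ G.trust u → Sat G φ u
  | Formula.str C T X φ, w =>
      ∃ s : {a : A // a ∈ C} → G.Δ,
        ∀ (u v : G.W) (δ : A → G.Δ),
          G.simSet X w u → T ⊆ G.trust u →
          (∀ (a : A) (h : a ∈ C), s ⟨a, h⟩ = δ a) →
          G.M u δ v → T ⊆ G.trust v → Sat G φ v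

/- ===================== Canonical game ===================== -/

/-- One block `X_i, b_i, T_i, F_i` of a canonical state. -/
structure Block (P V A B : Type) where
  X : Set V
  b : B
  T : Set V
  F : Set (Formula P V A)

variable {B : Type}

/-- `F(w)`: the last set of formulae of the sequence (or `F0` for the root). -/
def cF (F0 : Set (Formula P V A)) (l : List (Block P V A B)) : Set (Formula P V A) :=
  l.getLast?.elim F0 Block.F

/-- `𝒯_w = T(w)`: the last dataset of the sequence (or `T0` for the root). -/
def cTrust (T0 : Set V) (l : List (Block P V A B)) : Set V :=
  l.getLast?.elim T0 Block.T

/-- Membership of a sequence in the set of canonical states `W`. -/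
inductive IsState (T0 : Set V) (F0 : Set (Formula P V A)) :
    List (Block P V A B) → Prop
  | nil :
      (∀ (Y : Set V) (ψ : Formula P V A),
        Formula.imp (Formula.bel T0 Y ψ) ψ ∈ F0) →
      IsState T0 F0 []
  | snoc {l : List (Block P V A B)} {bl : Block P V A B} :
      IsState T0 F0 l →
      MaximalConsistent bl.F →
      (∀ φ : Formula P V A, Formula.bel ∅ bl.X φ ∈ cF F0 l → φ ∈ bl.F) →
      (∀ (Y : Set V) (ψ : Formula P V A),
        Formula.imp (Formula.bel bl.T Y ψ) ψ ∈ bl.F) →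
      IsState T0 F0 (l ++ [bl])

/-- The canonical states. -/
def CState (T0 : Set V) (F0 : Set (Formula P V A)) (B : Type) : Type :=
  {l : List (Block P V A B) // IsState T0 F0 l}

attribute [local instance] Classical.propDecidable

/-- Length of the longest common prefix of two sequences. -/
noncomputable def cpl {α : Type} : List α → List α → Nat
  | a :: as, b :: bs => if a = b then cpl as bs + 1 else 0
  | _, _ => 0

/-- The blocks labelling the edges on the unique simple path between two
nodes of the canonical tree. -/
noncomputable def pathBlocks (w u : List (Block P V A B)) : List (Block P V A B) :=
  w.drop (cpl w u) ++ u.drop (cpl w u)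

/-- `w ∼_x u` in the canonical game: every edge along the unique simple path
between `w` and `u` is labelled with `x`. -/
def csimVar (x : V) (w u : List (Block P V A B)) : Prop :=
  ∀ bl ∈ pathBlocks w u, x ∈ bl.X

/-- `w ∼_X u` in the canonical game. -/
def csim (X : Set V) (w u : List (Block P V A B)) : Prop :=
  ∀ x ∈ X, csimVar x w u

/-- The canonical mechanism `M`. -/
def Mech (T0 : Set V) (F0 : Set (Formula P V A))
    (w : CState T0 F0 B) (δ : A → Formula P V A × CState T0 F0 B)
    (v : CState T0 F0 B) : Prop :=
  ∀ (C : Set A) (T X : Set V) (φ : Formula P V A),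
    Formula.str C T X φ ∈ cF F0 w.1 →
    (∀ a ∈ C, (δ a).1 = φ) →
    (∀ a ∈ C, csim X w.1 (δ a).2.1) →
    T ⊆ cTrust T0 w.1 → T ⊆ cTrust T0 v.1 →
    φ ∈ cF F0 v.1

/-- Satisfaction `w ⊨ φ` on the canonical game (as `CSat T0 F0 φ w`). -/
def CSat (T0 : Set V) (F0 : Set (Formula P V A)) :
    Formula P V A → CState T0 F0 B → Prop
  | Formula.atom p, w => Formula.atom p ∈ cF F0 w.1
  | Formula.neg φ, w => ¬ CSat T0 F0 φ w
  | Formula.imp φ ψ, w => CSat T0 F0 φ w → CSat T0 F0 ψ w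
  | Formula.bel T X φ, w =>
      ∀ u : CState T0 F0 B, csim X w.1 u.1 → T ⊆ cTrust T0 u.1 → CSat T0 F0 φ u
  | Formula.str C T X φ, w =>
      ∃ s : {a : A // a ∈ C} → Formula P V A × CState T0 F0 B,
        ∀ (u v : CState T0 F0 B) (δ : A → Formula P V A × CState T0 F0 B),
          csim X w.1 u.1 → T ⊆ cTrust T0 u.1 →
          (∀ (a : A) (h : a ∈ C), s ⟨a, h⟩ = δ a) →
          Mech T0 F0 u δ v → T ⊆ cTrust T0 v.1 → CSat T0 F0 φ v

/- ===================== Harmony ===================== -/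

/-- Conjunction definable from ¬ and →. -/
def fand (φ ψ : Formula P V A) : Formula P V A :=
  Formula.neg (Formula.imp φ (Formula.neg ψ))

/-- A canonical tautology (verum). -/
noncomputable def verum (P V A : Type) [Nonempty (Formula P V A)] : Formula P V A :=
  Formula.imp (Classical.arbitrary (Formula P V A)) (Classical.arbitrary (Formula P V A))

/-- Conjunction of a finite list of formulae. -/
noncomputable def conjList [Nonempty (Formula P V A)] :
    List (Formula P V A) → Formula P V A
  | [] => verum P V A
  | φ :: l => fand φ (conjList l)

/-- The pair `(F, G)` is in `T`-harmony: `F ⊬ [∅]^T_V ¬⋀G'` for each finite `G' ⊆ G`. -/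
def THarmony [Nonempty (Formula P V A)] (T : Set V)
    (F G : Set (Formula P V A)) : Prop :=
  ∀ l : List (Formula P V A), (∀ ψ ∈ l, ψ ∈ G) →
    ¬ Deduces F (Formula.str ∅ T (Set.univ : Set V) (Formula.neg (conjList l)))

/-!
The canonical game is a tree of maximal consistent sets. An edge labelled `X` preserves every
belief indexed by a subset of `X`, and two nodes are `x`-indistinguishable when the path between
them uses only edges whose label contains `x`. An action is a formula an actor votes for together
with a node witnessing that the actor knows enough to cast the vote.

The crux is that a coalition `C` lacking `[C]^T_X φ` at `w` has no strategy there. Given the votes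
of `C`, Cooperation yields a maximal consistent `G ∌ φ` containing everything that these votes
force, and Belief in Unavoidability yields a maximal consistent `S` extending the `T, X`-beliefs at
`w` and compatible with `G` as an outcome. Append to `w` an `X`-edge to a node carrying `S`, marked
with a label that no vote of `C` mentions (Cantor's theorem supplies one). A witness that fails to
pass through the new node can be reached only along the new edge, so its vote counts there only for
datasets contained in `X`; hence an outcome carrying `G` is permitted.
-/

section

open Formula

variable {C : Set A} {T X Y : Set V} {F G : Set (Formula P V A)} {φ ψ χ : Formula P V A}

/-! ### Derivability -/

theorem Thm.imp_self : Thm (imp φ φ) :=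
  .taut fun v _ himp => by simp only [himp]; tauto

theorem Thm.imp_const : Thm (imp φ (imp ψ φ)) :=
  .taut fun v _ himp => by simp only [himp]; tauto

theorem Thm.imp_distrib : Thm (imp (imp φ (imp ψ χ)) (imp (imp φ ψ) (imp φ χ))) :=
  .taut fun v _ himp => by simp only [himp]; tauto

theorem Thm.neg_imp : Thm (imp (neg φ) (imp φ ψ)) :=
  .taut fun v hneg himp => by simp only [hneg, himp]; tauto

theorem Thm.imp_neg_imp : Thm (imp φ (imp (neg φ) ψ)) :=
  .taut fun v hneg himp => by simp only [hneg, himp]; tauto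

theorem Thm.reductio : Thm (imp (imp (neg φ) ψ) (imp (imp (neg φ) (neg ψ)) φ)) :=
  .taut fun v hneg himp => by simp only [hneg, himp]; tauto

theorem Thm.contrapose (h : Thm (imp φ ψ)) : Thm (imp (neg ψ) (neg φ)) :=
  .mp (.taut fun v hneg himp => by simp only [hneg, himp]; tauto) h

theorem Thm.neg_imp_comm (h : Thm (imp (neg φ) ψ)) : Thm (imp (neg ψ) φ) :=
  .mp (.taut fun v hneg himp => by simp only [hneg, himp]; tauto) h

theorem Thm.imp_neg_comm (h : Thm (imp φ (neg ψ))) : Thm (imp ψ (neg φ)) :=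
  .mp (.taut fun v hneg himp => by simp only [hneg, himp]; tauto) h

theorem Thm.imp_trans (h₁ : Thm (imp φ ψ)) (h₂ : Thm (imp ψ χ)) : Thm (imp φ χ) :=
  .mp (.mp .imp_distrib (.mp .imp_const h₂)) h₁

theorem Thm.bel_of_thm (h : Thm φ) : Thm (bel T X φ) :=
  .mp (.monoB (Set.empty_subset _) (Set.empty_subset _)) (.nec h)

theorem Thm.bel_imp_bel (h : Thm (imp φ ψ)) : Thm (imp (bel T X φ) (bel T X ψ)) :=
  .mp .distrib (.bel_of_thm h)

theorem Thm.str_of_thm (h : Thm φ) : Thm (str C T X φ) :=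
  .mp (.monoS (Set.empty_subset _) (Set.empty_subset _) (Set.empty_subset _)) (.mp .pub (.nec h))

theorem Thm.str_imp_str (h : Thm (imp φ ψ)) : Thm (imp (str C T X φ) (str C T X ψ)) := by
  simpa only [Set.empty_union] using Thm.mp (.coop (Set.empty_inter C)) (.str_of_thm h)

theorem Thm.bel_imp_bel_bel : Thm (imp (bel T X φ) (bel ∅ X (bel T X φ))) :=
  have possible : Thm (imp (bel T X φ) (neg (bel ∅ X (neg (bel T X φ))))) :=
    .imp_neg_comm .truth
  have of_possible : Thm (imp (neg (bel ∅ X (neg (bel T X φ)))) (bel T X φ)) :=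
    .neg_imp_comm .negIntro
  possible.imp_trans (Thm.negIntro.imp_trans of_possible.bel_imp_bel)

theorem Deduces.of_forall_deduces (h : Deduces F φ) (hFG : ∀ ψ ∈ F, Deduces G ψ) :
    Deduces G φ := by
  induction h with
  | thm h => exact .thm h
  | mem h => exact hFG _ h
  | mp _ _ himp hφ => exact .mp himp hφ

theorem Deduces.mono (h : Deduces F φ) (hFG : F ⊆ G) : Deduces G φ :=
  h.of_forall_deduces fun _ hψ => .mem (hFG hψ)

theorem Deduces.imp_of_insert (h : Deduces (insert φ F) ψ) : Deduces F (imp φ ψ) := by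
  induction h with
  | thm h => exact .thm (.mp .imp_const h)
  | mem h =>
    rcases h with rfl | h
    · exact .thm .imp_self
    · exact .mp (.thm .imp_const) (.mem h)
  | mp _ _ himp hφ => exact .mp (.mp (.thm .imp_distrib) himp) hφ

theorem Deduces.by_contradiction (h : Deduces (insert (neg φ) F) ψ)
    (h' : Deduces (insert (neg φ) F) (neg ψ)) : Deduces F φ :=
  .mp (.mp (.thm .reductio) h.imp_of_insert) h'.imp_of_insert

theorem Deduces.thm_of_empty (h : Deduces (∅ : Set (Formula P V A)) φ) : Thm φ := by
  induction h with
  | thm h => exact h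
  | mem h => exact h.elim
  | mp _ _ himp hφ => exact .mp himp hφ

theorem Deduces.exists_finite_subset (h : Deduces F φ) :
    ∃ t ⊆ F, t.Finite ∧ Deduces t φ := by
  induction h with
  | thm h => exact ⟨∅, Set.empty_subset _, Set.finite_empty, .thm h⟩
  | @mem ψ h => exact ⟨{ψ}, Set.singleton_subset_iff.2 h, Set.finite_singleton ψ, .mem rfl⟩
  | mp _ _ himp hφ =>
    obtain ⟨t, htF, ht, himp⟩ := himp
    obtain ⟨t', htF', ht', hφ⟩ := hφ
    exact ⟨t ∪ t', Set.union_subset htF htF', ht.union ht',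
      .mp (himp.mono Set.subset_union_left) (hφ.mono Set.subset_union_right)⟩

/-! ### Maximal consistent sets -/

theorem Consistent.mono (hG : Consistent G) (hFG : F ⊆ G) : Consistent F :=
  fun ⟨ψ, h, h'⟩ => hG ⟨ψ, h.mono hFG, h'.mono hFG⟩

theorem consistent_isOfFiniteCharacter :
    Order.IsOfFiniteCharacter {F : Set (Formula P V A) | Consistent F} := by
  refine fun F => ⟨fun hF t ht _ => hF.mono ht, fun hfin ⟨ψ, h, h'⟩ => ?_⟩
  obtain ⟨t, htF, ht, h⟩ := h.exists_finite_subset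
  obtain ⟨t', htF', ht', h'⟩ := h'.exists_finite_subset
  exact hfin (t ∪ t') (Set.union_subset htF htF') (ht.union ht')
    ⟨ψ, h.mono Set.subset_union_left, h'.mono Set.subset_union_right⟩

theorem Consistent.exists_maximalConsistent (hF : Consistent F) :
    ∃ S, F ⊆ S ∧ MaximalConsistent S := by
  obtain ⟨S, hFS, hS⟩ := consistent_isOfFiniteCharacter.exists_maximal hF
  exact ⟨S, hFS, hS.prop, fun G hG hSG => hS.eq_of_subset hG hSG⟩

theorem consistent_insert_neg (h : ¬ Deduces F φ) : Consistent (insert (neg φ) F) :=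
  fun ⟨_, hψ, hψ'⟩ => h (hψ.by_contradiction hψ')

namespace MaximalConsistent

theorem mem_of_consistent_insert (hF : MaximalConsistent F) (h : Consistent (insert φ F)) :
    φ ∈ F := by
  rw [hF.2 _ h (Set.subset_insert φ F)]
  exact Set.mem_insert φ F

theorem mem_of_deduces (hF : MaximalConsistent F) (h : Deduces F φ) : φ ∈ F :=
  hF.mem_of_consistent_insert fun ⟨ψ, hψ, hψ'⟩ =>
    hF.1 ⟨ψ, .mp hψ.imp_of_insert h, .mp hψ'.imp_of_insert h⟩

theorem mem_of_thm (hF : MaximalConsistent F) (h : Thm φ) : φ ∈ F :=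
  hF.mem_of_deduces (.thm h)

theorem mp_mem (hF : MaximalConsistent F) (himp : imp φ ψ ∈ F) (hφ : φ ∈ F) : ψ ∈ F :=
  hF.mem_of_deduces (.mp (.mem himp) (.mem hφ))

theorem mem_of_thm_imp (hF : MaximalConsistent F) (himp : Thm (imp φ ψ)) (hφ : φ ∈ F) : ψ ∈ F :=
  hF.mp_mem (hF.mem_of_thm himp) hφ

theorem neg_mem_iff (hF : MaximalConsistent F) : neg φ ∈ F ↔ φ ∉ F :=
  ⟨fun hneg hφ => hF.1 ⟨φ, .mem hφ, .mem hneg⟩, fun hφ =>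
    hF.mem_of_consistent_insert (consistent_insert_neg fun h => hφ (hF.mem_of_deduces h))⟩

theorem imp_mem_iff (hF : MaximalConsistent F) : imp φ ψ ∈ F ↔ (φ ∈ F → ψ ∈ F) := by
  refine ⟨hF.mp_mem, fun h => ?_⟩
  by_cases hφ : φ ∈ F
  · exact hF.mem_of_thm_imp .imp_const (h hφ)
  · exact hF.mem_of_thm_imp .neg_imp (hF.neg_mem_iff.2 hφ)

end MaximalConsistent

theorem exists_maximalConsistent_notMem (h : ¬ Deduces F φ) :
    ∃ S, F ⊆ S ∧ MaximalConsistent S ∧ φ ∉ S := by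
  obtain ⟨S, hFS, hS⟩ := (consistent_insert_neg h).exists_maximalConsistent
  exact ⟨S, (Set.subset_insert _ _).trans hFS, hS, hS.neg_mem_iff.1 (hFS (Set.mem_insert _ _))⟩

namespace MaximalConsistent

theorem bel_mem_of_deduces (hF : MaximalConsistent F) (h : Deduces {ψ | bel T X ψ ∈ F} φ) :
    bel T X φ ∈ F := by
  induction h with
  | thm h => exact hF.mem_of_thm h.bel_of_thm
  | mem h => exact h
  | mp _ _ himp hφ => exact hF.mp_mem (hF.mem_of_thm_imp .distrib himp) hφ

theorem bel_str_mem_iff (hF : MaximalConsistent F) :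
    bel T X (str C T X φ) ∈ F ↔ str C T X φ ∈ F :=
  ⟨hF.mem_of_thm_imp .strIntro₂, hF.mem_of_thm_imp .strIntro₁⟩

theorem exists_extends_bel_notMem (hF : MaximalConsistent F) (h : bel T X φ ∉ F) :
    ∃ S, {ψ | bel T X ψ ∈ F} ⊆ S ∧ MaximalConsistent S ∧ φ ∉ S :=
  exists_maximalConsistent_notMem fun hφ => h (hF.bel_mem_of_deduces hφ)

theorem str_iUnion_mem_of_deduces (hF : MaximalConsistent F) {D : Formula P V A → Set A}
    (hD : Pairwise fun ψ χ => Disjoint (D ψ) (D χ)) {t : Set (Formula P V A)} (ht : t.Finite)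
    (hmem : ∀ ψ ∈ t, str (D ψ) T X ψ ∈ F) (h : Deduces t φ) :
    str (⋃ ψ ∈ t, D ψ) T X φ ∈ F := by
  induction t, ht using Set.Finite.induction_on generalizing φ with
  | empty => exact hF.mem_of_thm h.thm_of_empty.str_of_thm
  | @insert ψ t hψt _ ih =>
    have himp : str (⋃ χ ∈ t, D χ) T X (imp ψ φ) ∈ F :=
      ih (fun χ hχ => hmem χ (Set.mem_insert_of_mem ψ hχ)) h.imp_of_insert
    have hdisj : Disjoint (⋃ χ ∈ t, D χ) (D ψ) :=
      Set.disjoint_iUnion₂_left.2 fun χ hχ => hD fun hχψ => hψt (hχψ ▸ hχ)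
    rw [Set.biUnion_insert, Set.union_comm]
    exact hF.mp_mem (hF.mem_of_thm_imp (.coop hdisj.inter_eq) himp) (hmem ψ (Set.mem_insert ψ t))

theorem exists_outcome_notMem (hF : MaximalConsistent F) (h : str C T X φ ∉ F)
    (vote : A → Formula P V A) :
    ∃ G, {ψ | str {a ∈ C | vote a = ψ} T X ψ ∈ F} ⊆ G ∧ MaximalConsistent G ∧ φ ∉ G := by
  refine exists_maximalConsistent_notMem fun hφ => h ?_
  obtain ⟨t, htF, ht, hφ⟩ := hφ.exists_finite_subset
  have hdisj : Pairwise fun ψ χ => Disjoint {a ∈ C | vote a = ψ} {a ∈ C | vote a = χ} :=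
    fun ψ χ hne => Set.disjoint_left.2 fun a ha ha' => hne (ha.2.symm.trans ha'.2)
  exact hF.mem_of_thm_imp
    (.monoS le_rfl le_rfl (Set.iUnion₂_subset fun ψ _ => Set.sep_subset C fun a => vote a = ψ))
    (hF.str_iUnion_mem_of_deduces hdisj ht htF hφ)

-- Primeness of `G` merges the finitely many `χ ∉ G` used in a derivation into their disjunction.
theorem exists_insert_deduces_of_union (hG : MaximalConsistent G)
    (h : Deduces (F ∪ {ψ | ∃ χ ∉ G, neg (str C T X χ) = ψ}) φ) :
    ∃ χ ∉ G, Deduces (insert (neg (str C T X χ)) F) φ := by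
  obtain ⟨χ₀, hχ₀⟩ : ∃ χ, χ ∉ G := by
    by_contra! hall
    exact hG.1 ⟨φ, .mem (hall φ), .mem (hall (neg φ))⟩
  have weaken {χ χ' θ : Formula P V A} (himp : Thm (imp χ χ'))
      (hθ : Deduces (insert (neg (str C T X χ)) F) θ) :
      Deduces (insert (neg (str C T X χ')) F) θ := by
    refine hθ.of_forall_deduces (Set.forall_mem_insert.2 ⟨?_, fun ψ hψ => .mem (.inr hψ)⟩)
    exact .mp (.thm himp.str_imp_str.contrapose) (.mem (Set.mem_insert _ _))
  induction h with
  | thm h => exact ⟨χ₀, hχ₀, .thm h⟩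
  | mem h =>
    rcases h with h | ⟨χ, hχ, rfl⟩
    · exact ⟨χ₀, hχ₀, .mem (.inr h)⟩
    · exact ⟨χ, hχ, .mem (Set.mem_insert _ _)⟩
  | mp _ _ himp hφ =>
    obtain ⟨χ, hχ, himp⟩ := himp
    obtain ⟨χ', hχ', hφ⟩ := hφ
    have hor : imp (neg χ) χ' ∉ G :=
      fun hor => hχ' (hG.mp_mem hor (hG.neg_mem_iff.2 hχ))
    exact ⟨imp (neg χ) χ', hor, .mp (weaken .imp_neg_imp himp) (weaken .imp_const hφ)⟩

theorem exists_extension_str_subset (hG : MaximalConsistent G)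
    (h : ∀ χ, Deduces F (str C T X χ) → χ ∈ G) :
    ∃ S, F ⊆ S ∧ MaximalConsistent S ∧ {χ | str C T X χ ∈ S} ⊆ G := by
  have hcons : Consistent (F ∪ {ψ | ∃ χ ∉ G, neg (str C T X χ) = ψ}) := by
    rintro ⟨ψ, hψ, hψ'⟩
    have hbot : Deduces (F ∪ {ψ | ∃ χ ∉ G, neg (str C T X χ) = ψ}) (neg (imp ψ ψ)) :=
      .mp (.mp (.thm .neg_imp) hψ') hψ
    obtain ⟨χ, hχ, hbot⟩ := hG.exists_insert_deduces_of_union hbot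
    exact hχ (h χ (.by_contradiction (.thm .imp_self) hbot))
  obtain ⟨S, hFS, hS⟩ := hcons.exists_maximalConsistent
  refine ⟨S, Set.subset_union_left.trans hFS, hS, fun χ hχS => ?_⟩
  by_contra hχ
  exact hS.neg_mem_iff.1 (hFS (.inr ⟨χ, hχ, rfl⟩)) hχS

theorem exists_transition_notMem (hF : MaximalConsistent F) (h : str C T X φ ∉ F)
    (vote : A → Formula P V A) :
    ∃ S G, MaximalConsistent S ∧ MaximalConsistent G ∧ {ψ | bel T X ψ ∈ F} ⊆ S ∧ φ ∉ G ∧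
      {ψ | str ∅ T Set.univ ψ ∈ S} ⊆ G ∧ {ψ | str {a ∈ C | vote a = ψ} T X ψ ∈ F} ⊆ G := by
  obtain ⟨G, hvote, hG, hφ⟩ := hF.exists_outcome_notMem h vote
  obtain ⟨S, hbel, hS, hunavoid⟩ := hG.exists_extension_str_subset
    (F := {ψ | bel T X ψ ∈ F}) (C := ∅) (T := T) (X := Set.univ) fun χ hχ => by
      have hχF : str ∅ T X χ ∈ F := hF.mem_of_thm_imp .unavoid (hF.bel_mem_of_deduces hχ)
      exact hvote (hF.mem_of_thm_imp (.monoS le_rfl le_rfl (Set.empty_subset _)) hχF)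
  exact ⟨S, G, hS, hG, hbel, hφ, hunavoid, hvote⟩

end MaximalConsistent

/-! ### Indistinguishability in the canonical tree -/

theorem take_cpl {α : Type} (l m : List α) : l.take (cpl l m) = m.take (cpl l m) := by
  induction l generalizing m with
  | nil => cases m <;> simp [cpl]
  | cons a l ih => cases m with
    | nil => simp [cpl]
    | cons b m =>
      by_cases hab : a = b
      · simp [cpl, hab, ih m]
      · simp [cpl, hab]

theorem length_le_cpl_append {α : Type} (p l m : List α) :
    p.length ≤ cpl (p ++ l) (p ++ m) := by
  induction p with
  | nil => exact Nat.zero_le _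
  | cons a p ih => simpa [cpl] using ih

theorem csim_iff_exists_append {w u : List (Block P V A B)} :
    csim X w u ↔ ∃ p l m, w = p ++ l ∧ u = p ++ m ∧ (∀ bl ∈ l, X ⊆ bl.X) ∧
      ∀ bl ∈ m, X ⊆ bl.X := by
  constructor
  · intro h
    refine ⟨w.take (cpl w u), w.drop (cpl w u), u.drop (cpl w u),
      (List.take_append_drop _ _).symm, ?_, ?_, ?_⟩
    · rw [take_cpl, List.take_append_drop]
    · exact fun bl hbl x hx => h x hx bl (List.mem_append_left _ hbl)
    · exact fun bl hbl x hx => h x hx bl (List.mem_append_right _ hbl)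
  · rintro ⟨p, l, m, rfl, rfl, hl, hm⟩ x hx bl hbl
    have mem_of_mem_drop {k : List (Block P V A B)}
        (h : bl ∈ (p ++ k).drop (cpl (p ++ l) (p ++ m))) : bl ∈ k := by
      rw [List.drop_append, List.drop_eq_nil_of_le (length_le_cpl_append p l m),
        List.nil_append] at h
      exact List.mem_of_mem_drop h
    rcases List.mem_append.1 hbl with h | h
    · exact hl bl (mem_of_mem_drop h) hx
    · exact hm bl (mem_of_mem_drop h) hx

theorem csimVar_iff_csim_singleton {x : V} {w u : List (Block P V A B)} :
    csimVar x w u ↔ csim {x} w u := by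
  simp only [csim, Set.mem_singleton_iff, forall_eq]

theorem csim_refl (X : Set V) (w : List (Block P V A B)) : csim X w w :=
  csim_iff_exists_append.2 ⟨w, [], [], by simp⟩

theorem csim_append {w l : List (Block P V A B)} (h : ∀ bl ∈ l, X ⊆ bl.X) : csim X w (w ++ l) :=
  csim_iff_exists_append.2 ⟨w, [], l, by simpa using h⟩

theorem csim_symm {w u : List (Block P V A B)} (h : csim X w u) : csim X u w := by
  obtain ⟨p, l, m, hw, hu, hl, hm⟩ := csim_iff_exists_append.1 h
  exact csim_iff_exists_append.2 ⟨p, m, l, hu, hw, hm, hl⟩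

theorem csim_trans {w u v : List (Block P V A B)} (hwu : csim X w u) (huv : csim X u v) :
    csim X w v := by
  obtain ⟨p, l, m, rfl, rfl, hl, hm⟩ := csim_iff_exists_append.1 hwu
  obtain ⟨q, m', k, hpq, rfl, hm', hk⟩ := csim_iff_exists_append.1 huv
  refine csim_iff_exists_append.2 ?_
  rcases List.append_eq_append_iff.1 hpq with ⟨r, rfl, rfl⟩ | ⟨r, rfl, rfl⟩
  · exact ⟨p, l, r ++ k, rfl, by simp, hl, by grind⟩
  · exact ⟨q, r ++ l, k, by simp, rfl, by grind, hk⟩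

theorem csim_equivalence (X : Set V) : Equivalence (csim X (P := P) (A := A) (B := B)) :=
  ⟨csim_refl X, csim_symm, csim_trans⟩

theorem subset_of_csim_append_of_not_prefix {w q : List (Block P V A B)} {bl : Block P V A B}
    (h : csim X (w ++ [bl]) q) (hq : ¬ w ++ [bl] <+: q) : X ⊆ bl.X := by
  obtain ⟨p, l, m, hp, rfl, hl, -⟩ := csim_iff_exists_append.1 h
  refine hl bl ?_
  rcases List.eq_nil_or_concat l with rfl | ⟨l, bl', rfl⟩
  · exact absurd ⟨m, by rw [hp, List.append_nil]⟩ hq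
  · rw [List.concat_eq_append, ← List.append_assoc] at hp
    rw [(List.append_singleton_inj.1 hp).2, List.concat_eq_append]
    exact List.mem_concat_self

theorem exists_label_forall_not_prefix [IsEmpty (B ↪ A)] (q : A → List (Block P V A B))
    (w : List (Block P V A B)) (X T : Set V) (F : Set (Formula P V A)) :
    ∃ b : B, ∀ a, ¬ w ++ [⟨X, b, T, F⟩] <+: q a := by
  by_contra! hprefix
  choose actor hactor using hprefix
  refine IsEmpty.false (α := B ↪ A) ⟨actor, fun b b' hbb => ?_⟩
  have h := hactor b
  rw [hbb] at h
  have heq := (List.prefix_of_prefix_length_le h (hactor b') (by simp)).eq_of_length (by simp)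
  simpa using heq

/-! ### Canonical states -/

variable {T₀ : Set V} {F₀ : Set (Formula P V A)} {l p : List (Block P V A B)} {bl : Block P V A B}

theorem cF_append_singleton : cF F₀ (l ++ [bl]) = bl.F := by
  simp [cF]

theorem cTrust_append_singleton : cTrust T₀ (l ++ [bl]) = bl.T := by
  simp [cTrust]

namespace IsState

theorem maximalConsistent_cF (h : IsState T₀ F₀ l) (hF₀ : MaximalConsistent F₀) :
    MaximalConsistent (cF F₀ l) := by
  cases h with
  | nil => exact hF₀
  | snoc _ hbl => rwa [cF_append_singleton]

theorem bel_imp_mem_cF (h : IsState T₀ F₀ l) : imp (bel (cTrust T₀ l) Y φ) φ ∈ cF F₀ l := by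
  cases h with
  | nil htrust => exact htrust Y φ
  | snoc _ _ _ htrust =>
    rw [cF_append_singleton, cTrust_append_singleton]
    exact htrust Y φ

theorem append_singleton_iff : IsState T₀ F₀ (l ++ [bl]) ↔ IsState T₀ F₀ l ∧
    MaximalConsistent bl.F ∧ (∀ φ, bel ∅ bl.X φ ∈ cF F₀ l → φ ∈ bl.F) ∧
      ∀ Y ψ, imp (bel bl.T Y ψ) ψ ∈ bl.F := by
  refine ⟨fun h => ?_, fun ⟨hl, hbl, hbel, htrust⟩ => hl.snoc hbl hbel htrust⟩
  generalize hk : l ++ [bl] = k at h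
  cases h with
  | nil => simp at hk
  | snoc hl hbl hbel htrust =>
    obtain ⟨rfl, rfl⟩ := List.append_singleton_inj.1 hk
    exact ⟨hl, hbl, hbel, htrust⟩

theorem append_singleton_of_bel_subset (h : IsState T₀ F₀ l) (hF₀ : MaximalConsistent F₀)
    (hbl : MaximalConsistent bl.F) (hsub : {φ | bel bl.T bl.X φ ∈ cF F₀ l} ⊆ bl.F) :
    IsState T₀ F₀ (l ++ [bl]) := by
  have hl := h.maximalConsistent_cF hF₀
  refine h.snoc hbl (fun φ hφ => ?_) fun Y ψ => hsub (hl.mem_of_thm .trust)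
  exact hsub (hl.mem_of_thm_imp (.monoB (Set.empty_subset _) le_rfl) hφ)

theorem bel_mem_cF_append_singleton_iff (h : IsState T₀ F₀ (l ++ [bl]))
    (hF₀ : MaximalConsistent F₀) (hX : X ⊆ bl.X) :
    bel T X φ ∈ cF F₀ (l ++ [bl]) ↔ bel T X φ ∈ cF F₀ l := by
  obtain ⟨hl, hbl, hbel, -⟩ := append_singleton_iff.1 h
  have hl := hl.maximalConsistent_cF hF₀
  rw [cF_append_singleton]
  have transfer {ψ : Formula P V A} (hψ : bel ∅ X ψ ∈ cF F₀ l) : ψ ∈ bl.F :=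
    hbel ψ (hl.mem_of_thm_imp (.monoB le_rfl hX) hψ)
  refine ⟨fun hφ => ?_, fun hφ => transfer (hl.mem_of_thm_imp .bel_imp_bel_bel hφ)⟩
  by_contra hnot
  have hneg := transfer (hl.mem_of_thm_imp .negIntro (hl.neg_mem_iff.2 hnot))
  exact hbl.neg_mem_iff.1 hneg hφ

theorem bel_mem_cF_append_iff (h : IsState T₀ F₀ (p ++ l)) (hF₀ : MaximalConsistent F₀)
    (hX : ∀ bl ∈ l, X ⊆ bl.X) : bel T X φ ∈ cF F₀ (p ++ l) ↔ bel T X φ ∈ cF F₀ p := by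
  induction l using List.reverseRecOn with
  | nil => rw [List.append_nil]
  | append_singleton l bl ih =>
    rw [← List.append_assoc] at h ⊢
    rw [h.bel_mem_cF_append_singleton_iff hF₀ (hX bl (by simp))]
    exact ih (append_singleton_iff.1 h).1 fun b hb => hX b (List.mem_append_left _ hb)

end IsState

namespace CState

variable {w u v : CState T₀ F₀ B}

theorem maximalConsistent (w : CState T₀ F₀ B) (hF₀ : MaximalConsistent F₀) :
    MaximalConsistent (cF F₀ w.1) :=
  w.2.maximalConsistent_cF hF₀

theorem bel_mem_iff_of_csim (hF₀ : MaximalConsistent F₀) (h : csim X w.1 u.1) :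
    bel T X φ ∈ cF F₀ w.1 ↔ bel T X φ ∈ cF F₀ u.1 := by
  obtain ⟨w, hw⟩ := w
  obtain ⟨u, hu⟩ := u
  obtain ⟨p, l, m, rfl, rfl, hl, hm⟩ := csim_iff_exists_append.1 h
  rw [hw.bel_mem_cF_append_iff hF₀ hl, hu.bel_mem_cF_append_iff hF₀ hm]

theorem str_mem_iff_of_csim (hF₀ : MaximalConsistent F₀) (h : csim X w.1 u.1) :
    str C T X φ ∈ cF F₀ w.1 ↔ str C T X φ ∈ cF F₀ u.1 := by
  rw [← (w.maximalConsistent hF₀).bel_str_mem_iff, ← (u.maximalConsistent hF₀).bel_str_mem_iff,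
    bel_mem_iff_of_csim hF₀ h]

theorem bel_mem_iff [Nonempty B] (hF₀ : MaximalConsistent F₀) :
    bel T X φ ∈ cF F₀ w.1 ↔
      ∀ u : CState T₀ F₀ B, csim X w.1 u.1 → T ⊆ cTrust T₀ u.1 → φ ∈ cF F₀ u.1 := by
  refine ⟨fun h u hwu hT => ?_, fun h => ?_⟩
  · have hu := u.maximalConsistent hF₀
    refine hu.mp_mem (u.2.bel_imp_mem_cF (Y := X)) ?_
    exact hu.mem_of_thm_imp (.monoB hT le_rfl) ((bel_mem_iff_of_csim hF₀ hwu).1 h)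
  · by_contra hφ
    obtain ⟨S, hbel, hS, hφS⟩ := (w.maximalConsistent hF₀).exists_extends_bel_notMem hφ
    let bl : Block P V A B := ⟨X, Classical.arbitrary B, T, S⟩
    let u : CState T₀ F₀ B := ⟨w.1 ++ [bl], w.2.append_singleton_of_bel_subset hF₀ hS hbel⟩
    have hFu : cF F₀ u.1 = S := cF_append_singleton
    have hTu : cTrust T₀ u.1 = T := cTrust_append_singleton
    exact hφS (hFu ▸ h u (csim_append (by simp [bl])) hTu.ge)

theorem mem_of_str_mem_of_mech (hF₀ : MaximalConsistent F₀)
    {δ : A → Formula P V A × CState T₀ F₀ B} (h : str C T X φ ∈ cF F₀ w.1)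
    (hwu : csim X w.1 u.1) (hTu : T ⊆ cTrust T₀ u.1) (hδ : ∀ a ∈ C, (φ, w) = δ a)
    (hM : Mech T₀ F₀ u δ v) (hTv : T ⊆ cTrust T₀ v.1) : φ ∈ cF F₀ v.1 :=
  hM C T X φ ((str_mem_iff_of_csim hF₀ hwu).1 h) (fun a ha => by rw [← hδ a ha])
    (fun a ha => by rw [← hδ a ha]; exact csim_symm hwu) hTu hTv

theorem mech_of_fresh_block (hF₀ : MaximalConsistent F₀) (hu : u.1 = w.1 ++ [bl])
    {δ : A → Formula P V A × CState T₀ F₀ B} (hfresh : ∀ a ∈ C, ¬ u.1 <+: (δ a).2.1)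
    (hothers : ∀ a ∉ C, (δ a).1 ∈ cF F₀ v.1)
    (hunavoid : {ψ | str ∅ bl.T Set.univ ψ ∈ bl.F} ⊆ cF F₀ v.1)
    (hvote : {ψ | str {a ∈ C | (δ a).1 = ψ} bl.T bl.X ψ ∈ cF F₀ w.1} ⊆ cF F₀ v.1) :
    Mech T₀ F₀ u δ v := by
  intro D T X ψ hψ hD hsim hTu _
  have hFu : cF F₀ u.1 = bl.F := by rw [hu, cF_append_singleton]
  have humax := u.maximalConsistent hF₀
  replace hTu : T ⊆ bl.T := by rwa [hu, cTrust_append_singleton] at hTu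
  rcases D.eq_empty_or_nonempty with rfl | ⟨a, ha⟩
  · exact hunavoid (hFu ▸ humax.mem_of_thm_imp (.monoS hTu (Set.subset_univ X) le_rfl) hψ)
  by_cases hDC : D ⊆ C
  · have hX : X ⊆ bl.X :=
      subset_of_csim_append_of_not_prefix (hu ▸ hsim a ha) (hu ▸ hfresh a (hDC ha))
    have hDvote : D ⊆ {a ∈ C | (δ a).1 = ψ} := fun a ha => ⟨hDC ha, hD a ha⟩
    have hwu : csim bl.X w.1 u.1 := hu ▸ csim_append (by simp)
    exact hvote ((str_mem_iff_of_csim hF₀ hwu).2 (humax.mem_of_thm_imp (.monoS hTu hX hDvote) hψ))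
  · obtain ⟨a, haD, haC⟩ := Set.not_subset.1 hDC
    exact hD a haD ▸ hothers a haC

theorem exists_transition_of_str_notMem [IsEmpty (B ↪ A)] (hF₀ : MaximalConsistent F₀)
    (h : str C T X φ ∉ cF F₀ w.1) (s : C → Formula P V A × CState T₀ F₀ B) :
    ∃ (u v : CState T₀ F₀ B) (δ : A → Formula P V A × CState T₀ F₀ B),
      csim X w.1 u.1 ∧ T ⊆ cTrust T₀ u.1 ∧ (∀ a (ha : a ∈ C), s ⟨a, ha⟩ = δ a) ∧
        Mech T₀ F₀ u δ v ∧ T ⊆ cTrust T₀ v.1 ∧ φ ∉ cF F₀ v.1 := by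
  -- Actors outside `C` vote for a tautology, which forces nothing.
  let δ : A → Formula P V A × CState T₀ F₀ B :=
    fun a => if ha : a ∈ C then s ⟨a, ha⟩ else (imp φ φ, w)
  obtain ⟨S, G, hS, hG, hbel, hφ, hunavoid, hvote⟩ :=
    (w.maximalConsistent hF₀).exists_transition_notMem h fun a => (δ a).1
  obtain ⟨b, hb⟩ := exists_label_forall_not_prefix (fun a => (δ a).2.1) w.1 X T S
  let u : CState T₀ F₀ B :=
    ⟨w.1 ++ [⟨X, b, T, S⟩], w.2.append_singleton_of_bel_subset hF₀ hS hbel⟩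
  have hFu : cF F₀ u.1 = S := cF_append_singleton
  have hTu : cTrust T₀ u.1 = T := cTrust_append_singleton
  have hpub : {ψ | bel T ∅ ψ ∈ cF F₀ u.1} ⊆ G := fun ψ hψ => by
    have hψS : str ∅ T ∅ ψ ∈ S := hS.mem_of_thm_imp .pub (hFu ▸ hψ)
    exact hunavoid (hS.mem_of_thm_imp (.monoS le_rfl (Set.empty_subset _) le_rfl) hψS)
  let v : CState T₀ F₀ B :=
    ⟨u.1 ++ [⟨∅, b, T, G⟩], u.2.append_singleton_of_bel_subset hF₀ hG hpub⟩
  have hFv : cF F₀ v.1 = G := cF_append_singleton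
  have hTv : cTrust T₀ v.1 = T := cTrust_append_singleton
  have hothers : ∀ a ∉ C, (δ a).1 ∈ cF F₀ v.1 := fun a ha => by
    simpa [δ, ha] using (v.maximalConsistent hF₀).mem_of_thm .imp_self
  have hM : Mech T₀ F₀ u δ v :=
    mech_of_fresh_block hF₀ rfl (fun a _ => hb a) hothers (hFv ▸ hunavoid) (hFv ▸ hvote)
  exact ⟨u, v, δ, csim_append (by simp), hTu.ge, fun a ha => by simp [δ, ha], hM, hTv.ge, hFv ▸ hφ⟩

end CState

/-! ### The canonical game -/

/-- The canonical game, in which satisfaction at a state is membership in its last set of formulae.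
An action pairs the formula an actor votes for with a state from which the actor votes. -/
def canonicalGame (T₀ : Set V) (F₀ : Set (Formula P V A)) (B : Type) [Nonempty (Formula P V A)]
    [Nonempty (CState T₀ F₀ B)] : Game P V A where
  W := CState T₀ F₀ B
  sim x w u := csimVar x w.1 u.1
  sim_equiv x := by
    simp only [csimVar_iff_csim_singleton]
    exact (csim_equivalence {x}).comap Subtype.val
  trust w := cTrust T₀ w.1
  Δ := Formula P V A × CState T₀ F₀ B
  delta_nonempty := inferInstance
  M := Mech T₀ F₀
  pi p := {w | atom p ∈ cF F₀ w.1}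

theorem sat_canonicalGame_iff [Nonempty (Formula P V A)] [Nonempty (CState T₀ F₀ B)]
    [IsEmpty (B ↪ A)] (hF₀ : MaximalConsistent F₀) (φ : Formula P V A)
    (w : CState T₀ F₀ B) : Sat (canonicalGame T₀ F₀ B) φ w ↔ φ ∈ cF F₀ w.1 := by
  have : Nonempty B := not_isEmpty_iff.1 fun _ => IsEmpty.false (α := B ↪ A) default
  induction φ generalizing w with
  | atom p => rfl
  | neg φ ih => exact (not_congr (ih w)).trans (w.maximalConsistent hF₀).neg_mem_iff.symm
  | imp φ ψ ihφ ihψ =>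
    exact (imp_congr (ihφ w) (ihψ w)).trans (w.maximalConsistent hF₀).imp_mem_iff.symm
  | bel T X φ ih =>
    rw [CState.bel_mem_iff hF₀]
    exact forall_congr' fun u => imp_congr_right fun _ => imp_congr_right fun _ => ih u
  | str C T X φ ih =>
    refine ⟨fun ⟨s, hs⟩ => ?_, fun h => ⟨fun _ => (φ, w), fun u v δ hwu hTu hδ hM hTv => ?_⟩⟩
    · by_contra hφ
      obtain ⟨u, v, δ, hwu, hTu, hδ, hM, hTv, hφv⟩ :=
        CState.exists_transition_of_str_notMem hF₀ hφ s
      exact hφv ((ih v).1 (hs u v δ hwu hTu hδ hM hTv))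
    · exact (ih v).2 (CState.mem_of_str_mem_of_mech hF₀ h hwu hTu hδ hM hTv)

end

/-- Strong completeness: if F ⊬ φ then there is a game and a state w
with w ⊨ f for each f ∈ F and w ⊭ φ. -/
theorem strong_completeness {P V A : Type}
    (F : Set (Formula P V A)) (φ : Formula P V A) (h : ¬ Deduces F φ) :
    ∃ (G : Game P V A) (w : G.W),
      (∀ f ∈ F, Sat G f w) ∧ ¬ Sat G φ w := by
  obtain ⟨F₀, hFF₀, hF₀, hφ⟩ := exists_maximalConsistent_notMem h
  let root : CState ∅ F₀ (Set A) := ⟨[], .nil fun _ _ => hF₀.mem_of_thm .truth⟩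
  have : Nonempty (Formula P V A) := ⟨φ⟩
  have : Nonempty (CState ∅ F₀ (Set A)) := ⟨root⟩
  have : IsEmpty (Set A ↪ A) := ⟨fun g => Function.cantor_injective g g.injective⟩
  refine ⟨canonicalGame ∅ F₀ (Set A), root, fun f hf => ?_, fun hsat => hφ ?_⟩
  · exact (sat_canonicalGame_iff hF₀ f root).2 (hFF₀ hf)
  · exact (sat_canonicalGame_iff hF₀ φ root).1 hsat
end

section
/- Positive Introspection: For any formula φ ∈ Φ, any coalition-free datasets T, X ⊆ V, the formula B^T_X φ → B^∅_X B^T_X φ is a theorem of the logical system, i.e. ⊢ B^T_X φ → B^∅_X B^T_X φ. -/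
variable {P V A : Type}

variable {B : Type}

attribute [local instance] Classical.propDecidable

/-!
If `p` is any formula with `⊢ ¬p → B^∅_X ¬p`, then `p` entails `¬B^∅_X ¬p` by Truth, hence
`B^∅_X ¬B^∅_X ¬p` by Negative Introspection. Contraposing the assumption gives `⊢ ¬B^∅_X ¬p → p`,
and applying this under the outer `B^∅_X` yields `B^∅_X p`. For `p = B^T_X φ` the assumption is
Negative Introspection again.
-/

namespace Thm

open Formula

variable {φ ψ χ : Formula P V A}

theorem imp_trans_s2 (hφψ : Thm (imp φ ψ)) (hψχ : Thm (imp ψ χ)) : Thm (imp φ χ) := by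
  have syllogism : Tautology (imp (imp φ ψ) (imp (imp ψ χ) (imp φ χ))) := by
    intro v _ v_imp
    simp only [v_imp]
    tauto
  exact mp (mp (taut syllogism) hφψ) hψχ

theorem imp_neg_comm_s2 (h : Thm (imp φ (neg ψ))) : Thm (imp ψ (neg φ)) := by
  have contraposition : Tautology (imp (imp φ (neg ψ)) (imp ψ (neg φ))) := by
    intro v v_neg v_imp
    simp only [v_neg, v_imp]
    tauto
  exact mp (taut contraposition) h

theorem neg_imp_comm_s2 (h : Thm (imp (neg φ) ψ)) : Thm (imp (neg ψ) φ) := by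
  have contraposition : Tautology (imp (imp (neg φ) ψ) (imp (neg ψ) φ)) := by
    intro v v_neg v_imp
    simp only [v_neg, v_imp]
    tauto
  exact mp (taut contraposition) h

theorem bel_of_thm_s2 (T X : Set V) (h : Thm φ) : Thm (bel T X φ) :=
  mp (monoB (Set.empty_subset T) (Set.empty_subset X)) (nec h)

theorem bel_imp_bel_s2 (T X : Set V) (h : Thm (imp φ ψ)) : Thm (imp (bel T X φ) (bel T X ψ)) :=
  mp distrib (bel_of_thm_s2 T X h)

theorem imp_neg_bel_neg (X : Set V) (φ : Formula P V A) : Thm (imp φ (neg (bel ∅ X (neg φ)))) :=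
  imp_neg_comm_s2 truth

theorem imp_bel_neg_bel_neg (X : Set V) (φ : Formula P V A) :
    Thm (imp φ (bel ∅ X (neg (bel ∅ X (neg φ))))) :=
  imp_trans_s2 (imp_neg_bel_neg X φ) negIntro

theorem imp_bel_of_neg_imp_bel_neg {X : Set V} (h : Thm (imp (neg φ) (bel ∅ X (neg φ)))) :
    Thm (imp φ (bel ∅ X φ)) :=
  imp_trans_s2 (imp_bel_neg_bel_neg X φ) (bel_imp_bel_s2 ∅ X (neg_imp_comm_s2 h))

end Thm

/-- Positive Introspection: ⊢ B^T_X φ → B^∅_X B^T_X φ. -/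
theorem positive_introspection {P V A : Type} (T X : Set V) (φ : Formula P V A) :
    Thm (Formula.imp (Formula.bel T X φ) (Formula.bel ∅ X (Formula.bel T X φ))) :=
  Thm.imp_bel_of_neg_imp_bel_neg Thm.negIntro
end
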